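/- arXiv:2407.02177 — 2 statements merged into one kernel-verified Lean document; each statement's English description precedes it below -/
import Mathlib

section
/- Consider an MS-DWSF instance on a path with the facility at node a = n (so all groups are at nodes i < n and move rightward). Let OPT_D be its optimal objective value, let W_D = d({n−1,n})·∑_G w(G), and let OPT_B be the optimal value of the MS-BPWRT instance whose groups are all the groups G_{i,j} (i < n) with their given sizes and weights, with capacity C and ready times τ(G_{i,j}) = d(i, n−1) (the sum of the distances of the edges between nodes i and n−1). Then OPT_B ≤ OPT_D − W_D. In particular, from any feasible MS-DWSF solution, setting B_{T'} = D_{n−1}^{(T')} for every time T' yields a feasible MS-BPWRT packing whose objective value equals the MS-DWSF objective value minus W_D. -/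
/-- `distTo d i k` is the total distance of the edges of the path between nodes `i`
and `k` (for `i ≤ k`), where `d v` is the distance of edge `{v, v+1}`. -/
def distTo (d : ℕ → ℕ) (i k : ℕ) : ℕ := ∑ v ∈ Finset.Ico i k, d v

/-- The MS-DWSF dynamics (facility at node `a`): `stateAt n a orig d D i t` is the
collection `𝒮_i^{(t)}` of groups present at node `i` at time `t` under schedule `D`. -/
def stateAt {m : ℕ} (n a : ℕ) (orig : Fin m → ℕ) (d : ℕ → ℕ)
    (D : ℕ → ℕ → Finset (Fin m)) (i : ℕ) : ℕ → Finset (Fin m)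
  | 0 => Finset.univ.filter fun g => orig g = i
  | t + 1 =>
      ((stateAt n a orig d D i t) \ D i (t + 1)) ∪
        (if 1 < i ∧ i ≤ a ∧ d (i - 1) ≤ t + 1 then D (i - 1) (t + 1 - d (i - 1)) else ∅) ∪
        (if a ≤ i ∧ i < n ∧ d i ≤ t + 1 then D (i + 1) (t + 1 - d i) else ∅)

/-- A feasible MS-DWSF schedule. -/
def FeasSched {m : ℕ} (n a C : ℕ) (orig S : Fin m → ℕ) (d : ℕ → ℕ)
    (D : ℕ → ℕ → Finset (Fin m)) : Prop :=
  (∀ t, D a t = ∅) ∧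
  (∀ i, D i 0 = ∅) ∧
  (∀ i t, (i = 0 ∨ n < i) → D i t = ∅) ∧
  (∀ i t, D i (t + 1) ⊆ stateAt n a orig d D i t) ∧
  (∀ i t, ∑ g ∈ D i t, S g ≤ C)

/-- The arrival time `α(G)` of group `g` at the facility `a` under schedule `D`. -/
noncomputable def arrival {m : ℕ} (n a : ℕ) (orig : Fin m → ℕ) (d : ℕ → ℕ)
    (D : ℕ → ℕ → Finset (Fin m)) (g : Fin m) : ℕ :=
  sInf {t | g ∈ stateAt n a orig d D a t}

/-- The bin (dispatch time across the last edge `{n-1, n}`) of group `g` in the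
MS-BPWRT packing obtained from a MS-DWSF schedule `D` by `B_{T'} = D_{n-1}^{(T')}`. -/
noncomputable def binOf {m : ℕ} (n : ℕ) (D : ℕ → ℕ → Finset (Fin m)) (g : Fin m) : ℕ :=
  sInf {T' | g ∈ D (n - 1) T'}

theorem state_dist {m : ℕ} (n C : ℕ) (orig S : Fin m → ℕ) (d : ℕ → ℕ)
    (hd : ∀ e, 1 ≤ e → e < n → 1 ≤ d e)
    (D : ℕ → ℕ → Finset (Fin m))
    (hfeas : FeasSched n n C orig S d D) (g : Fin m) :
    ∀ t i, g ∈ stateAt n n orig d D i t → orig g ≤ i ∧ distTo d (orig g) i ≤ t := by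
  obtain ⟨h1, h2, h3, h4, h5⟩ := hfeas
  intro t
  induction t using Nat.strong_induction_on with
  | _ t ih =>
    intro i hg
    cases t with
    | zero =>
      simp only [stateAt, Finset.mem_filter, Finset.mem_univ, true_and] at hg
      subst hg
      simp [distTo]
    | succ t =>
      rw [stateAt] at hg
      rw [if_neg (show ¬ (n ≤ i ∧ i < n ∧ d i ≤ t + 1) by omega), Finset.union_empty,
        Finset.mem_union, Finset.mem_sdiff] at hg
      rcases hg with hg | hg
      · obtain ⟨ha, hb⟩ := ih t (by omega) i hg.1
        exact ⟨ha, by omega⟩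
      · split_ifs at hg with hc
        · obtain ⟨c1, c2, c3⟩ := hc
          have hdp := hd (i - 1) (by omega) (by omega)
          obtain ⟨s, hs⟩ | hs : (∃ s, t + 1 - d (i - 1) = s + 1) ∨ t + 1 - d (i - 1) = 0 := by
            rcases Nat.eq_zero_or_pos (t + 1 - d (i - 1)) with h | h
            · exact Or.inr h
            · exact Or.inl ⟨t + 1 - d (i - 1) - 1, by omega⟩
          · rw [hs] at hg
            obtain ⟨ha, hb⟩ := ih s (by omega) (i - 1) (h4 _ _ hg)
            refine ⟨by omega, ?_⟩
            obtain ⟨k, rfl⟩ : ∃ k, i = k + 1 := ⟨i - 1, by omega⟩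
            simp only [Nat.add_sub_cancel] at *
            unfold distTo at *
            rw [Finset.sum_Ico_succ_top ha]
            omega
          · rw [hs, h2] at hg
            simp at hg
        · simp at hg

theorem state_last {m : ℕ} (n C : ℕ) (orig S : Fin m → ℕ) (d : ℕ → ℕ)
    (hn : 2 ≤ n) (horig : ∀ g, 1 ≤ orig g ∧ orig g < n)
    (hd : ∀ e, 1 ≤ e → e < n → 1 ≤ d e)
    (D : ℕ → ℕ → Finset (Fin m))
    (hfeas : FeasSched n n C orig S d D) (g : Fin m) (t : ℕ) :
    g ∈ stateAt n n orig d D n t ↔ ∃ s, s + d (n - 1) ≤ t ∧ g ∈ D (n - 1) s := by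
  obtain ⟨h1, h2, h3, h4, h5⟩ := hfeas
  have hdp := hd (n - 1) (by omega) (by omega)
  induction t with
  | zero =>
    simp only [stateAt, Finset.mem_filter, Finset.mem_univ, true_and]
    constructor
    · intro h
      have := (horig g).2
      omega
    · rintro ⟨s, hs, _⟩
      omega
  | succ t ih =>
    rw [stateAt]
    rw [if_neg (show ¬ (n ≤ n ∧ n < n ∧ d n ≤ t + 1) by omega), Finset.union_empty,
      Finset.mem_union, Finset.mem_sdiff, h1]
    constructor
    · rintro (⟨hg, _⟩ | hg)
      · obtain ⟨s, hs, hg⟩ := ih.1 hg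
        exact ⟨s, by omega, hg⟩
      · split_ifs at hg with hc
        · exact ⟨_, by omega, hg⟩
        · simp at hg
    · rintro ⟨s, hs, hg⟩
      rcases Nat.lt_or_ge t (s + d (n - 1)) with h | h
      · right
        rw [if_pos (by omega)]
        have : t + 1 - d (n - 1) = s := by omega
        rwa [this]
      · left
        exact ⟨ih.2 ⟨s, h, hg⟩, by simp⟩

theorem packing_part (n C m : ℕ) (orig S w : Fin m → ℕ) (d : ℕ → ℕ)
    (hn : 2 ≤ n)
    (horig : ∀ g, 1 ≤ orig g ∧ orig g < n)
    (hd : ∀ e, 1 ≤ e → e < n → 1 ≤ d e)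
    (D : ℕ → ℕ → Finset (Fin m))
    (hfeas : FeasSched n n C orig S d D)
    (harr : ∀ g, ∃ t, g ∈ stateAt n n orig d D n t) :
    (∀ g, ∃ T', g ∈ D (n - 1) T') ∧
      (∀ g, 1 ≤ binOf n D g ∧ distTo d (orig g) (n - 1) ≤ binOf n D g) ∧
      (∀ j, ∑ g ∈ Finset.univ.filter (fun g => binOf n D g = j), S g ≤ C) ∧
      (∑ g, w g * binOf n D g) + d (n - 1) * (∑ g, w g) =
        ∑ g, w g * arrival n n orig d D g := by
  have hlast := state_last n C orig S d hn horig hd D hfeas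
  have hdist := state_dist n C orig S d hd D hfeas
  obtain ⟨h1, h2, h3, h4, h5⟩ := hfeas
  have hex : ∀ g, ∃ T', g ∈ D (n - 1) T' := by
    intro g
    obtain ⟨t, ht⟩ := harr g
    obtain ⟨s, _, hs⟩ := (hlast g t).1 ht
    exact ⟨s, hs⟩
  have hmem : ∀ g, g ∈ D (n - 1) (binOf n D g) := fun g => Nat.sInf_mem (hex g)
  have harrival : ∀ g, arrival n n orig d D g = binOf n D g + d (n - 1) := by
    intro g
    apply le_antisymm
    · exact Nat.sInf_le ((hlast g _).2 ⟨_, le_rfl, hmem g⟩)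
    · have : g ∈ stateAt n n orig d D n (arrival n n orig d D g) := Nat.sInf_mem (harr g)
      obtain ⟨s, hs, hg⟩ := (hlast g _).1 this
      have : binOf n D g ≤ s := Nat.sInf_le hg
      omega
  refine ⟨hex, ?_, ?_, ?_⟩
  · intro g
    have hg := hmem g
    cases hb : binOf n D g with
    | zero => rw [hb, h2] at hg; simp at hg
    | succ b =>
      rw [hb] at hg
      have := (hdist g b (n - 1) (h4 _ _ hg)).2
      omega
  · intro j
    refine le_trans (Finset.sum_le_sum_of_subset ?_) (h5 (n - 1) j)
    intro g hg
    have : binOf n D g = j := by simpa using hg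
    exact this ▸ hmem g
  · rw [Finset.mul_sum, ← Finset.sum_add_distrib]
    refine Finset.sum_congr rfl fun g _ => ?_
    rw [harrival]
    ring

/-!
STATEMENT 11: MS-DWSF on a path with the facility at node `a = n`.  With
`W_D = d({n-1,n}) · ∑ G, w(G)` and the MS-BPWRT instance on the same groups with
capacity `C` and ready times `τ(G) = d(orig G, n-1)`, we have `OPT_B ≤ OPT_D − W_D`.
In particular, from any feasible MS-DWSF schedule `D` under which every group reaches
the facility, setting `B_{T'} = D_{n-1}^{(T')}` yields a feasible MS-BPWRT packing
(every group is dispatched across the last edge exactly once, at a positive time no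
earlier than its ready time and respecting the capacity) whose objective value equals
the MS-DWSF objective value minus `W_D`. -/
theorem stmt11 (n C m : ℕ) (orig S w : Fin m → ℕ) (d : ℕ → ℕ)
    (hn : 2 ≤ n) (hC : 1 ≤ C)
    (horig : ∀ g, 1 ≤ orig g ∧ orig g < n)
    (hS : ∀ g, 1 ≤ S g) (hw : ∀ g, 1 ≤ w g) (hSC : ∀ g, S g ≤ C)
    (hd : ∀ e, 1 ≤ e → e < n → 1 ≤ d e)
    (D : ℕ → ℕ → Finset (Fin m))
    (hfeas : FeasSched n n C orig S d D)
    (harr : ∀ g, ∃ t, g ∈ stateAt n n orig d D n t) :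
    ((∀ g, ∃ T', g ∈ D (n - 1) T') ∧
      (∀ g, 1 ≤ binOf n D g ∧ distTo d (orig g) (n - 1) ≤ binOf n D g) ∧
      (∀ j, ∑ g ∈ Finset.univ.filter (fun g => binOf n D g = j), S g ≤ C) ∧
      (∑ g, w g * binOf n D g) + d (n - 1) * (∑ g, w g) =
        ∑ g, w g * arrival n n orig d D g) ∧
    (((sInf {v : ℕ | ∃ t : Fin m → ℕ, (∀ g, 1 ≤ t g) ∧
          (∀ g, distTo d (orig g) (n - 1) ≤ t g) ∧
          (∀ j, ∑ g ∈ Finset.univ.filter (fun g => t g = j), S g ≤ C) ∧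
          v = ∑ g, w g * t g} : ℕ) : ℤ) ≤
        ((sInf {v : ℕ | ∃ D' : ℕ → ℕ → Finset (Fin m), FeasSched n n C orig S d D' ∧
          (∀ g, ∃ t, g ∈ stateAt n n orig d D' n t) ∧
          v = ∑ g, w g * arrival n n orig d D' g} : ℕ) : ℤ) -
          ((d (n - 1) * (∑ g, w g) : ℕ) : ℤ)) := by
  refine ⟨packing_part n C m orig S w d hn horig hd D hfeas harr, ?_⟩
  obtain ⟨D', hf, ha, hv⟩ := Nat.sInf_mem
    (s := {v : ℕ | ∃ D' : ℕ → ℕ → Finset (Fin m), FeasSched n n C orig S d D' ∧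
          (∀ g, ∃ t, g ∈ stateAt n n orig d D' n t) ∧
          v = ∑ g, w g * arrival n n orig d D' g}) ⟨_, D, hfeas, harr, rfl⟩
  obtain ⟨_, p2, p3, p4⟩ := packing_part n C m orig S w d hn horig hd D' hf ha
  have hle := Nat.sInf_le (s := {v : ℕ | ∃ t : Fin m → ℕ, (∀ g, 1 ≤ t g) ∧
          (∀ g, distTo d (orig g) (n - 1) ≤ t g) ∧
          (∀ j, ∑ g ∈ Finset.univ.filter (fun g => t g = j), S g ≤ C) ∧
          v = ∑ g, w g * t g})
    ⟨binOf n D', fun g => (p2 g).1, fun g => (p2 g).2, p3, rfl⟩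
  rw [hv, ← p4]
  have hz := (Nat.cast_le (α := ℤ)).2 hle
  rw [Nat.cast_add, add_sub_cancel_right]
  exact hz
end

section
/- Let s_1,…,s_m ∈ ℤ₊ and C ∈ ℤ₊ with ∑_{i=1}^{m} s_i = 2C. Consider packings t : {1,…,m} → ℤ₊ satisfying ∑_{i : t_i = j} s_i ≤ C for every j ∈ ℤ₊, with objective value ∑_{i=1}^{m} s_i·t_i. Then: (a) every such packing has objective value at least 3C; and (b) the minimum objective value over all such packings equals 3C if and only if there exists a subset S ⊆ {1,…,m} with ∑_{i∈S} s_i = C. -/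
/-!
STATEMENT 12: Let `s_1,…,s_m ∈ ℤ₊` and `C ∈ ℤ₊` with `∑ i, s i = 2C`.  Consider
packings `t : {1,…,m} → ℤ₊` with `∑_{i : t i = j} s i ≤ C` for every bin `j`, and
objective value `∑ i, s i · t i`.  Then:
(a) every such packing has objective value at least `3C`; and
(b) the minimum objective value over all such packings equals `3C` — equivalently,
given (a), some packing attains objective value `3C` — if and only if there is a
subset `S ⊆ {1,…,m}` with `∑_{i ∈ S} s i = C`.
-/
theorem stmt12 (m C : ℕ) (hm : 1 ≤ m) (hC : 1 ≤ C) (s : Fin m → ℕ)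
    (hs : ∀ i, 1 ≤ s i) (hsum : ∑ i, s i = 2 * C) :
    (∀ t : Fin m → ℕ, (∀ i, 1 ≤ t i) →
        (∀ j, ∑ i ∈ Finset.univ.filter (fun i => t i = j), s i ≤ C) →
        3 * C ≤ ∑ i, s i * t i) ∧
    ((∃ t : Fin m → ℕ, (∀ i, 1 ≤ t i) ∧
        (∀ j, ∑ i ∈ Finset.univ.filter (fun i => t i = j), s i ≤ C) ∧
        ∑ i, s i * t i = 3 * C) ↔
      ∃ I : Finset (Fin m), ∑ i ∈ I, s i = C) := by
  have key : ∀ t : Fin m → ℕ, (∀ i, 1 ≤ t i) →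
      4 * C ≤ ∑ i, s i * t i + ∑ i ∈ Finset.univ.filter (fun i => t i = 1), s i := by
    intro t ht
    have h : ∑ i, 2 * s i ≤ ∑ i, (s i * t i + if t i = 1 then s i else 0) := by
      apply Finset.sum_le_sum
      intro i _
      have h1 := ht i
      split_ifs with h2
      · rw [h2]; omega
      · have h3 : 2 ≤ t i := by omega
        nlinarith
    rw [← Finset.mul_sum, hsum, Finset.sum_add_distrib, ← Finset.sum_filter] at h
    omega
  refine ⟨?_, ?_, ?_⟩
  · intro t ht hb
    have h1 := key t ht
    have h2 := hb 1
    omega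
  · rintro ⟨t, ht, hb, ho⟩
    refine ⟨Finset.univ.filter (fun i => t i = 1), ?_⟩
    have h1 := key t ht
    have h2 := hb 1
    omega
  · rintro ⟨I, hI⟩
    have hc : ∑ i ∈ I, s i + ∑ i ∈ Iᶜ, s i = 2 * C := by
      rw [Finset.sum_add_sum_compl, hsum]
    refine ⟨fun i => if i ∈ I then 1 else 2, ?_, ?_, ?_⟩
    · intro i
      dsimp only
      split_ifs <;> omega
    · intro j
      by_cases hj : j = 1
      · refine le_trans (Finset.sum_le_sum_of_subset (t := I) ?_) hI.le
        intro i hi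
        by_contra hn
        simp [hn] at hi
        omega
      · refine le_trans (Finset.sum_le_sum_of_subset (t := Iᶜ) ?_) (by omega)
        intro i hi
        rw [Finset.mem_compl]
        intro hn
        simp [hn] at hi
        omega
    · rw [← Finset.sum_add_sum_compl I]
      have e1 : ∑ i ∈ I, s i * (if i ∈ I then 1 else 2) = ∑ i ∈ I, s i :=
        Finset.sum_congr rfl (fun i hi => by simp [hi])
      have e2 : ∑ i ∈ Iᶜ, s i * (if i ∈ I then 1 else 2) = (∑ i ∈ Iᶜ, s i) * 2 := by
        rw [Finset.sum_mul]
        exact Finset.sum_congr rfl (fun i hi => by simp [Finset.mem_compl.mp hi])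
      rw [e1, e2]
      omega
end
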